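/- Let G and G' be bow-free acyclic path diagrams on the same finite vertex type V that are algebraically equivalent, i.e. A(G) = A(G'). Then for every subset W ⊆ V, the induced subgraphs G_W and G'_W (the mixed graphs on the subtype ↥W whose directed and bidirected edge relations are the restrictions of those of G and G') are also algebraically equivalent: A(G_W) = A(G'_W). (Theorem 5 of the paper.) -/

import Mathlib

open Matrix

structure MixedGraph (V : Type*) where
  D : V → V → Prop
  B : V → V → Prop
  symm : ∀ v w, B v w → B w v
  irrefl : ∀ v, ¬ B v v

namespace MixedGraph

variable {V : Type*}

/-- The graph is acyclic: no directed cycles. -/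
def Acyclic (G : MixedGraph V) : Prop := ∀ v, ¬ Relation.TransGen G.D v v

/-- The graph is simple: for distinct `v, w`, at most one of
`D v w`, `D w v`, `B v w` holds. -/
def Simple (G : MixedGraph V) : Prop :=
  ∀ v w, v ≠ w →
    ¬ (G.D v w ∧ G.D w v) ∧ ¬ (G.D v w ∧ G.B v w) ∧ ¬ (G.D w v ∧ G.B v w)

/-- A bow-free acyclic path diagram: a simple acyclic mixed graph. -/
def IsBAP (G : MixedGraph V) : Prop := G.Acyclic ∧ G.Simple

/-- `Λ` is compatible with `G`. -/
def LamCompat (G : MixedGraph V) (Λ : Matrix V V ℝ) : Prop :=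
  ∀ v w, ¬ G.D v w → Λ v w = 0

/-- `Ω` is compatible with `G`. -/
def OmCompat [Fintype V] (G : MixedGraph V) (Ω : Matrix V V ℝ) : Prop :=
  Ω.PosDef ∧ ∀ v w, v ≠ w → ¬ G.B v w → ¬ G.B w v → Ω v w = 0

/-- The model `M(G)` of a mixed graph. -/
def model [Fintype V] [DecidableEq V] (G : MixedGraph V) : Set (Matrix V V ℝ) :=
  {S | ∃ Λ Ω : Matrix V V ℝ, G.LamCompat Λ ∧ G.OmCompat Ω ∧
    S = ((1 - Λ)⁻¹)ᵀ * Ω * (1 - Λ)⁻¹}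

/-- The algebraic model `A(G)`: the real Zariski closure of `M(G)`. -/
def algModel [Fintype V] [DecidableEq V] (G : MixedGraph V) : Set (Matrix V V ℝ) :=
  {S | ∀ p : MvPolynomial (V × V) ℝ,
    (∀ T ∈ G.model, MvPolynomial.eval (fun e => T e.1 e.2) p = 0) →
    MvPolynomial.eval (fun e => S e.1 e.2) p = 0}

/-- The skeleton (adjacency relation) of `G`. -/
def adj (G : MixedGraph V) (v w : V) : Prop :=
  v ≠ w ∧ (G.D v w ∨ G.D w v ∨ G.B v w)

/-- A collider triple of `G`. -/
def ColliderTriple (G : MixedGraph V) (u v w : V) : Prop :=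
  u ≠ v ∧ v ≠ w ∧ u ≠ w ∧ (G.D u v ∨ G.B u v) ∧ (G.D w v ∨ G.B w v)

/-- A v-structure of `G`. -/
def VStructure (G : MixedGraph V) (u v w : V) : Prop :=
  G.ColliderTriple u v w ∧ ¬ G.adj u w

end MixedGraph

/-- The induced subgraph of a mixed graph on a subset `W` of the vertices. -/
def MixedGraph.induce {V : Type*} (G : MixedGraph V) (W : Set V) : MixedGraph W where
  D v w := G.D v w
  B v w := G.B v w
  symm v w h := G.symm v w h
  irrefl v := G.irrefl v

/-!
`M(G)` is irreducible, because two of its points are joined by a polynomial curve that runs inside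
it, and a matrix `S` on `W` lies in `M(G_W)` only if the block diagonal matrix `S ⊕ 1` on `V` lies
in `M(G)`, hence in `A(G')`. Bow-freeness of `G'` makes its coefficient matrix `Λ` a rational
function of the covariance matrix whose denominator `d` does not vanish at `1`, so `S ⊕ 1` has
exactly one coefficient matrix for `G'` unless `d (S ⊕ 1) = 0`. As `S ⊕ 1` is unchanged when the
coordinates outside `W` are negated, so is that `Λ`; it therefore has no entries between `W` and its
complement, and restricts to a coefficient matrix of `S` for `G'_W`. Hence if `p` vanishes on
`M(G'_W)`, then `p S * d (S ⊕ 1)` vanishes on `M(G_W)`, and so does `p` by irreducibility, as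
`d 1 ≠ 0`.
-/

/-! ### Matrices -/

section Matrices

variable {m n R : Type*}

theorem isNilpotent_of_wellFounded [Fintype n] [DecidableEq n] [Semiring R] {r : n → n → Prop}
    (hr : WellFounded r) {A : Matrix n n R} (hA : ∀ i j, ¬ r i j → A i j = 0) :
    IsNilpotent A := by
  have column_eq_zero : ∀ j, ∃ k, ∀ l ≥ k, ∀ i, (A ^ l) i j = 0 := by
    intro j
    induction j using hr.induction with
    | _ j ih =>
      choose! k hk using ih
      refine ⟨Finset.univ.sup k + 1, fun l hl i => ?_⟩
      obtain ⟨l, rfl⟩ : ∃ l', l = l' + 1 := ⟨l - 1, by lia⟩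
      rw [pow_succ, mul_apply]
      refine Finset.sum_eq_zero fun u _ => ?_
      by_cases hu : r u j
      · have hku : k u ≤ l := (Finset.le_sup (Finset.mem_univ u)).trans (by lia)
        rw [hk u hu l hku i, zero_mul]
      · rw [hA u j hu, mul_zero]
  choose k hk using column_eq_zero
  refine ⟨Finset.univ.sup k, ?_⟩
  ext i j
  exact hk j _ (Finset.le_sup (Finset.mem_univ j)) i

theorem map_inv_of_isUnit [Fintype n] [DecidableEq n] {S : Type*} [CommRing R] [CommRing S]
    (f : R →+* S) {A : Matrix n n R} (hA : IsUnit A) : A⁻¹.map f = (A.map f)⁻¹ := by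
  refine (inv_eq_right_inv ?_).symm
  rw [← Matrix.map_mul, mul_nonsing_inv _ ((isUnit_iff_isUnit_det A).1 hA),
    Matrix.map_one f f.map_zero f.map_one]

theorem submatrix_mul_of_forall_eq_zero [NonUnitalNonAssocSemiring R] {l l' m' n' : Type*}
    [Fintype m] [Fintype m'] {A : Matrix l m R} {B : Matrix m n R} {r : l' → l} {c : n' → n}
    {e : m' → m} (he : Function.Injective e)
    (hAB : ∀ u ∉ Set.range e, ∀ i j, A (r i) u * B u (c j) = 0) :
    (A * B).submatrix r c = A.submatrix r e * B.submatrix e c := by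
  ext i j
  exact (Fintype.sum_of_injective e he _ _ (fun u hu => hAB u hu i j) fun _ => rfl).symm

theorem posDef_fromBlocks_zero [Finite m] [Finite n] {A : Matrix m m ℝ}
    {D : Matrix n n ℝ} (hA : A.PosDef) (hD : D.PosDef) : (fromBlocks A 0 0 D).PosDef := by
  classical
  have := Fintype.ofFinite m
  have := Fintype.ofFinite n
  have hsemi : (fromBlocks A 0 0ᴴ D).PosSemidef := by
    let := hA.isUnit.invertible
    rw [PosDef.fromBlocks₁₁ _ _ hA]
    simpa using hD.posSemidef
  rw [conjTranspose_zero] at hsemi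
  exact hsemi.posDef_iff_isUnit.2 (isUnit_fromBlocks_zero₂₁.2 ⟨hA.isUnit, hD.isUnit⟩)

theorem convex_setOf_posDef [Finite n] : Convex ℝ {A : Matrix n n ℝ | A.PosDef} :=
  convex_iff_forall_pos.2 fun _ hA _ hB _ _ ha hb _ => (hA.smul ha).add (hB.smul hb)

open Polynomial in
/-- The segment from `A` to `B` as a matrix with polynomial entries in the time parameter. -/
noncomputable def polynomialSegment [CommRing R] (A B : Matrix m n R) : Matrix m n R[X] :=
  AffineMap.lineMap (A.map C) (B.map C) (X : R[X])

theorem polynomialSegment_map_eval [CommRing R] (A B : Matrix m n R) (t : R) :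
    (polynomialSegment A B).map (Polynomial.evalRingHom t) = AffineMap.lineMap A B t := by
  ext i j
  simp [polynomialSegment, AffineMap.lineMap_apply]

end Matrices

/-! ### Functions regular at a point -/

section Regular

variable {P σ K : Type*} [CommRing K] [IsDomain K]

/-- For a family of points `x a` of affine space, the ring of those functions of the parameter `a`
that are given by a fraction of polynomials in `x a` whose denominator does not vanish at the base
point `x o`. The fraction is written with its denominator cleared, so that nothing is asked of the
function where the denominator vanishes. -/
def regularFunctions (x : P → σ → K) (o : P) : Subring (P → K) where
  carrier := {f | ∃ d n : MvPolynomial σ K, MvPolynomial.eval (x o) d ≠ 0 ∧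
    ∀ a, MvPolynomial.eval (x a) d * f a = MvPolynomial.eval (x a) n}
  zero_mem' := ⟨1, 0, by simp, by simp⟩
  one_mem' := ⟨1, 1, by simp, by simp⟩
  neg_mem' := by
    rintro f ⟨d, n, hd, hf⟩
    exact ⟨d, -n, hd, fun a => by simp [hf]⟩
  add_mem' := by
    rintro f g ⟨d, n, hd, hf⟩ ⟨d', n', hd', hg⟩
    refine ⟨d * d', d' * n + d * n', by simp [hd, hd'], fun a => ?_⟩
    simp only [map_add, map_mul, Pi.add_apply, ← hf, ← hg]
    ring
  mul_mem' := by
    rintro f g ⟨d, n, hd, hf⟩ ⟨d', n', hd', hg⟩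
    refine ⟨d * d', n * n', by simp [hd, hd'], fun a => ?_⟩
    simp only [map_mul, Pi.mul_apply, ← hf, ← hg]
    ring

namespace regularFunctions

variable {x : P → σ → K} {o : P}

theorem coordinate_mem (i : σ) : (fun a => x a i) ∈ regularFunctions x o :=
  ⟨1, .X i, by simp, by simp⟩

theorem mem_of_mul_mem {f g : P → K} (hg : g ∈ regularFunctions x o) (hgo : g o ≠ 0)
    (hgf : g * f ∈ regularFunctions x o) : f ∈ regularFunctions x o := by
  obtain ⟨d, n, hd, hn⟩ := hg
  obtain ⟨d', n', hd', hn'⟩ := hgf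
  refine ⟨d' * n, d * n', ?_, fun a => ?_⟩
  · rw [map_mul, ← hn]
    exact mul_ne_zero hd' (mul_ne_zero hd hgo)
  · simp only [map_mul, ← hn, ← hn', Pi.mul_apply]
    ring

theorem exists_common_denominator {ι : Type*} [Finite ι] {f : ι → P → K}
    (hf : ∀ i, f i ∈ regularFunctions x o) :
    ∃ (d : MvPolynomial σ K) (n : ι → MvPolynomial σ K), MvPolynomial.eval (x o) d ≠ 0 ∧
      ∀ i a, MvPolynomial.eval (x a) d * f i a = MvPolynomial.eval (x a) (n i) := by
  classical
  have := Fintype.ofFinite ι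
  choose d n hd hn using hf
  refine ⟨∏ i, d i, fun i => (∏ j ∈ Finset.univ.erase i, d j) * n i, ?_, fun i a => ?_⟩
  · rw [map_prod]
    exact Finset.prod_ne_zero_iff.2 fun i _ => hd i
  · rw [← Finset.prod_erase_mul _ _ (Finset.mem_univ i), map_mul, map_mul, mul_assoc, hn]

variable {n : Type*} [Fintype n] [DecidableEq n]

theorem det_mem {A : P → Matrix n n K}
    (hA : ∀ i j, (fun a => A a i j) ∈ regularFunctions x o) :
    (fun a => (A a).det) ∈ regularFunctions x o := by
  have hdet : (fun a => (A a).det) =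
      ∑ s : Equiv.Perm n, Equiv.Perm.sign s • ∏ i, fun a => A a (s i) i := by
    ext a
    simp [det_apply]
  rw [hdet]
  exact sum_mem fun s _ => zsmul_mem (prod_mem fun i _ => hA (s i) i) _

theorem mem_of_mulVec_eq {A : P → Matrix n n K} {y b : P → n → K}
    (hA : ∀ i j, (fun a => A a i j) ∈ regularFunctions x o)
    (hb : ∀ i, (fun a => b a i) ∈ regularFunctions x o)
    (hAy : ∀ a, A a *ᵥ y a = b a) (hdet : (A o).det ≠ 0) (i : n) :
    (fun a => y a i) ∈ regularFunctions x o := by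
  refine mem_of_mul_mem (det_mem hA) hdet ?_
  have hcramer : (fun a => (A a).det) * (fun a => y a i) =
      fun a => ((A a).updateCol i (b a)).det := by
    ext a
    rw [← cramer_apply, ← hAy, cramer_eq_adjugate_mulVec, mulVec_mulVec, adjugate_mul,
      smul_mulVec, one_mulVec]
    rfl
  rw [hcramer]
  refine det_mem fun j k => ?_
  by_cases hk : k = i
  · simpa [updateCol_apply, hk] using hb j
  · simpa [updateCol_apply, hk] using hA j k

end regularFunctions

end Regular

namespace MixedGraph

/-! ### Coefficient matrices -/

section Residual

variable {V R : Type*} [Fintype V] [DecidableEq V] [CommRing R]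

/-- The noise matrix `Ω` that the coefficient matrix `Λ` leaves over from the covariance
matrix `S`. -/
def residual (S Λ : Matrix V V R) : Matrix V V R := (1 - Λ)ᵀ * S * (1 - Λ)

/-- The covariance matrix with coefficient matrix `Λ` and noise matrix `Ω`. -/
noncomputable def covariance (Λ Ω : Matrix V V R) : Matrix V V R :=
  ((1 - Λ)⁻¹)ᵀ * Ω * (1 - Λ)⁻¹

theorem residual_covariance {Λ : Matrix V V R} (hΛ : IsUnit (1 - Λ)) (Ω : Matrix V V R) :
    residual (covariance Λ Ω) Λ = Ω := by
  have hdet := (isUnit_iff_isUnit_det _).1 hΛ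
  calc (1 - Λ)ᵀ * (((1 - Λ)⁻¹)ᵀ * Ω * (1 - Λ)⁻¹) * (1 - Λ)
      = ((1 - Λ)⁻¹ * (1 - Λ))ᵀ * Ω * ((1 - Λ)⁻¹ * (1 - Λ)) := by
        simp only [transpose_mul, Matrix.mul_assoc]
    _ = Ω := by simp [nonsing_inv_mul _ hdet]

theorem covariance_residual {Λ : Matrix V V R} (hΛ : IsUnit (1 - Λ)) (S : Matrix V V R) :
    covariance Λ (residual S Λ) = S := by
  have hdet := (isUnit_iff_isUnit_det _).1 hΛ
  calc ((1 - Λ)⁻¹)ᵀ * ((1 - Λ)ᵀ * S * (1 - Λ)) * (1 - Λ)⁻¹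
      = ((1 - Λ) * (1 - Λ)⁻¹)ᵀ * S * ((1 - Λ) * (1 - Λ)⁻¹) := by
        simp only [transpose_mul, Matrix.mul_assoc]
    _ = S := by simp [mul_nonsing_inv _ hdet]

theorem covariance_map {R' : Type*} [CommRing R'] (f : R →+* R') {Λ : Matrix V V R}
    (hΛ : IsUnit (1 - Λ)) (Ω : Matrix V V R) :
    (covariance Λ Ω).map f = covariance (Λ.map f) (Ω.map f) := by
  have hsub : (1 - Λ).map f = 1 - Λ.map f := by
    rw [Matrix.map_sub f f.map_sub, Matrix.map_one f f.map_zero f.map_one]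
  simp only [covariance, Matrix.map_mul, transpose_map, map_inv_of_isUnit f hΛ, hsub]

theorem posDef_residual_iff {S Λ : Matrix V V ℝ} (hΛ : IsUnit (1 - Λ)) :
    (residual S Λ).PosDef ↔ S.PosDef :=
  IsUnit.posDef_star_left_conjugate_iff hΛ

theorem residual_rescale {s t : V → R} (hst : ∀ v, s v * t v = 1) (S Λ : Matrix V V R) :
    residual (diagonal s * S * diagonal s) (diagonal t * Λ * diagonal s) =
      diagonal s * residual S Λ * diagonal s := by
  have hts : diagonal t * diagonal s = 1 := by simp [diagonal_mul_diagonal, mul_comm (t _), hst]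
  have hst' : diagonal s * diagonal t = 1 := by simp [diagonal_mul_diagonal, hst]
  have hsub : 1 - diagonal t * Λ * diagonal s = diagonal t * (1 - Λ) * diagonal s := by
    rw [Matrix.mul_sub, Matrix.sub_mul, Matrix.mul_one, hts]
  calc residual (diagonal s * S * diagonal s) (diagonal t * Λ * diagonal s)
      = diagonal s * (1 - Λ)ᵀ * (diagonal t * diagonal s) * S * (diagonal s * diagonal t) *
          (1 - Λ) * diagonal s := by
        rw [residual, hsub]
        simp only [transpose_mul, diagonal_transpose, Matrix.mul_assoc]
    _ = diagonal s * residual S Λ * diagonal s := by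
        simp only [hts, hst', residual, Matrix.mul_one, Matrix.mul_assoc]

end Residual

variable {V : Type*} {G : MixedGraph V}

theorem Acyclic.induce (hG : G.Acyclic) (W : Set V) : (G.induce W).Acyclic :=
  fun v hv => hG v (Relation.TransGen.lift (p := G.D) Subtype.val (fun _ _ h => h) _ _ hv)

theorem Acyclic.wellFounded [Finite V] (hG : G.Acyclic) : WellFounded G.D :=
  have : Std.Irrefl (Relation.TransGen G.D) := ⟨hG⟩
  Subrelation.wf Relation.TransGen.single
    (Finite.wellFounded_of_trans_of_irrefl (Relation.TransGen G.D))

theorem Acyclic.ne_of_directed (hG : G.Acyclic) {v w : V} (h : G.D v w) : v ≠ w := by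
  rintro rfl
  exact hG v (.single h)

theorem IsBAP.not_bidirected_of_directed (hG : G.IsBAP) {v w : V} (h : G.D v w) : ¬ G.B v w :=
  fun hB => (hG.2 v w (hG.1.ne_of_directed h)).2.1 ⟨h, hB⟩

/-- Evaluation of polynomials in the matrix entries at a given matrix. -/
noncomputable abbrev evalAt (S : Matrix V V ℝ) : MvPolynomial (V × V) ℝ →+* ℝ :=
  MvPolynomial.eval fun e => S e.1 e.2

theorem evalAt_map {R : Type*} [CommRing R] [Algebra ℝ R] (f : R →ₐ[ℝ] ℝ) (A : Matrix V V R)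
    (p : MvPolynomial (V × V) ℝ) :
    evalAt (A.map f) p = f (MvPolynomial.aeval (fun e => A e.1 e.2) p) := by
  rw [MvPolynomial.comp_aeval_apply, MvPolynomial.aeval_eq_eval]
  rfl

theorem LamCompat.lineMap {Λ₀ Λ₁ : Matrix V V ℝ} (h₀ : G.LamCompat Λ₀) (h₁ : G.LamCompat Λ₁)
    (t : ℝ) : G.LamCompat (AffineMap.lineMap Λ₀ Λ₁ t) := fun v w hvw => by
  simp [AffineMap.lineMap_apply, h₀ v w hvw, h₁ v w hvw]

theorem OmCompat.lineMap [Fintype V] {Ω₀ Ω₁ : Matrix V V ℝ} (h₀ : G.OmCompat Ω₀)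
    (h₁ : G.OmCompat Ω₁) {t : ℝ} (ht : t ∈ Set.Icc (0 : ℝ) 1) :
    G.OmCompat (AffineMap.lineMap Ω₀ Ω₁ t) :=
  ⟨convex_setOf_posDef.lineMap_mem h₀.1 h₁.1 ht, fun v w hvw hB hB' => by
    simp [AffineMap.lineMap_apply, h₀.2 v w hvw hB hB', h₁.2 v w hvw hB hB']⟩

variable [Fintype V] [DecidableEq V] {S T Λ : Matrix V V ℝ}

theorem Acyclic.isUnit_one_sub {R : Type*} [CommRing R] (hG : G.Acyclic) {A : Matrix V V R}
    (hA : ∀ v w, ¬ G.D v w → A v w = 0) : IsUnit (1 - A) :=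
  (isNilpotent_of_wellFounded hG.wellFounded hA).isUnit_one_sub

/-- `Λ` is a coefficient matrix of `S` for `G`: it is supported on the directed edges, and its
residual is supported on the diagonal and the bidirected edges. Positive definiteness is left out
to keep this condition algebraic in `S` and `Λ`. -/
def IsCoeff (G : MixedGraph V) (S Λ : Matrix V V ℝ) : Prop :=
  G.LamCompat Λ ∧ ∀ v w, v ≠ w → ¬ G.B v w → residual S Λ v w = 0

theorem isCoeff_one_zero (G : MixedGraph V) : G.IsCoeff 1 0 :=
  ⟨fun _ _ _ => rfl, fun v w hvw _ => by simp [residual, hvw]⟩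

theorem mem_model_iff (hG : G.Acyclic) : S ∈ G.model ↔ S.PosDef ∧ ∃ Λ, G.IsCoeff S Λ := by
  constructor
  · rintro ⟨Λ, Ω, hΛ, hΩ, rfl⟩
    have hunit := hG.isUnit_one_sub hΛ
    have hres : residual (((1 - Λ)⁻¹)ᵀ * Ω * (1 - Λ)⁻¹) Λ = Ω := residual_covariance hunit Ω
    refine ⟨(posDef_residual_iff hunit).1 (hres.symm ▸ hΩ.1), Λ, hΛ, fun v w hvw hB => ?_⟩
    rw [hres]
    exact hΩ.2 v w hvw hB (mt (G.symm w v) hB)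
  · rintro ⟨hS, Λ, hΛ, hres⟩
    have hunit := hG.isUnit_one_sub hΛ
    exact ⟨Λ, residual S Λ, hΛ,
      ⟨(posDef_residual_iff hunit).2 hS, fun v w hvw hB _ => hres v w hvw hB⟩,
      (covariance_residual hunit S).symm⟩

theorem one_mem_model (hG : G.Acyclic) : 1 ∈ G.model :=
  (mem_model_iff hG).2 ⟨.one, 0, G.isCoeff_one_zero⟩

theorem IsCoeff.rescale (h : G.IsCoeff S Λ) {s t : V → ℝ} (hst : ∀ v, s v * t v = 1) :
    G.IsCoeff (diagonal s * S * diagonal s) (diagonal t * Λ * diagonal s) := by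
  refine ⟨fun v w hvw => by simp [h.1 v w hvw], fun v w hvw hB => ?_⟩
  rw [residual_rescale hst, mul_diagonal, diagonal_mul, h.2 v w hvw hB, mul_zero, zero_mul]

/-! ### Generic identifiability -/

/-- A covariance matrix together with a coefficient matrix of it for `G`. -/
structure CoeffPair (G : MixedGraph V) where
  cov : Matrix V V ℝ
  coeff : Matrix V V ℝ
  isCoeff : G.IsCoeff cov coeff

/-- The functions of a covariance matrix and a coefficient matrix of it that are rational in the
covariance matrix, with a denominator that does not vanish at the identity. -/
def rationalFunctions (G : MixedGraph V) : Subring (G.CoeffPair → ℝ) :=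
  regularFunctions (fun (a : G.CoeffPair) (e : V × V) => a.cov e.1 e.2) ⟨1, 0, G.isCoeff_one_zero⟩

/-- The matrix of the linear equations satisfied by column `v` of a coefficient matrix: a parent `w`
of `v` contributes the equation that the residual vanishes at `(w, v)`, any other `w` the equation
`Λ w v = 0`. -/
noncomputable def columnSystem (G : MixedGraph V) (v : V) (S Λ : Matrix V V ℝ) : Matrix V V ℝ :=
  open Classical in
  of fun w => if G.D w v then ((1 - Λ)ᵀ * S : Matrix V V ℝ) w else (1 : Matrix V V ℝ) w

theorem columnSystem_one_zero (G : MixedGraph V) (v : V) : G.columnSystem v 1 0 = 1 := by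
  ext w p
  simp [columnSystem]

open Classical in
theorem IsBAP.columnSystem_mulVec (hG : G.IsBAP) (h : G.IsCoeff S Λ) (v : V) :
    G.columnSystem v S Λ *ᵥ Λ.col v =
      fun w => if G.D w v then ((1 - Λ)ᵀ * S : Matrix V V ℝ) w v else 0 := by
  ext w
  by_cases hw : G.D w v
  · have hres := h.2 w v (hG.1.ne_of_directed hw) (hG.not_bidirected_of_directed hw)
    rw [residual, Matrix.mul_sub, Matrix.mul_one, Matrix.sub_apply, sub_eq_zero] at hres
    simp only [columnSystem, mulVec, of_apply, hw, if_true]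
    exact hres.symm
  · simpa [columnSystem, hw, mulVec, dotProduct, one_apply] using h.1 w v hw

theorem one_sub_transpose_mul_mem_rationalFunctions {w : V}
    (hw : ∀ q, (fun a : G.CoeffPair => a.coeff q w) ∈ G.rationalFunctions) (p : V) :
    (fun a : G.CoeffPair => ((1 - a.coeff)ᵀ * a.cov : Matrix V V ℝ) w p) ∈ G.rationalFunctions := by
  have hentry : (fun a : G.CoeffPair => ((1 - a.coeff)ᵀ * a.cov : Matrix V V ℝ) w p) =
      (fun a => a.cov w p) - ∑ q, (fun a => a.coeff q w) * fun a => a.cov q p := by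
    ext a
    rw [transpose_sub, transpose_one, Matrix.sub_mul, Matrix.one_mul, Matrix.sub_apply, mul_apply]
    simp
  rw [hentry]
  exact sub_mem (regularFunctions.coordinate_mem (w, p))
    (sum_mem fun q _ => mul_mem (hw q) (regularFunctions.coordinate_mem (q, p)))

-- Cramer's rule, by induction along the directed edges: the equations for column `v` only involve
-- the columns of the parents of `v`.
theorem IsBAP.coeff_mem_rationalFunctions (hG : G.IsBAP) (w v : V) :
    (fun a : G.CoeffPair => a.coeff w v) ∈ G.rationalFunctions := by
  classical
  induction v using hG.1.wellFounded.induction generalizing w with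
  | _ v ih =>
    have hmatrix : ∀ u p, (fun a : G.CoeffPair => G.columnSystem v a.cov a.coeff u p) ∈
        G.rationalFunctions := by
      intro u p
      by_cases hu : G.D u v
      · simpa only [columnSystem, of_apply, hu, if_true] using
          one_sub_transpose_mul_mem_rationalFunctions (fun q => ih u hu q) p
      · obtain rfl | hup := eq_or_ne u p
        · simp only [columnSystem, of_apply, hu, if_false, one_apply_eq]
          exact one_mem G.rationalFunctions
        · simp only [columnSystem, of_apply, hu, if_false, one_apply_ne hup]
          exact zero_mem G.rationalFunctions
    have hvector : ∀ u, (fun a : G.CoeffPair =>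
        if G.D u v then ((1 - a.coeff)ᵀ * a.cov : Matrix V V ℝ) u v else 0) ∈
          G.rationalFunctions := by
      intro u
      by_cases hu : G.D u v
      · simpa only [hu, if_true] using
          one_sub_transpose_mul_mem_rationalFunctions (fun q => ih u hu q) v
      · simp only [hu, if_false]
        exact zero_mem G.rationalFunctions
    exact regularFunctions.mem_of_mulVec_eq (y := fun a => a.coeff.col v) hmatrix hvector
      (fun a => hG.columnSystem_mulVec a.isCoeff v) (by simp [columnSystem_one_zero]) w

theorem IsBAP.exists_smul_coeff_eq (hG : G.IsBAP) :
    ∃ (d : MvPolynomial (V × V) ℝ) (N : Matrix V V (MvPolynomial (V × V) ℝ)), evalAt 1 d ≠ 0 ∧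
      ∀ S Λ, G.IsCoeff S Λ → evalAt S d • Λ = N.map (evalAt S) := by
  obtain ⟨d, n, hd, hn⟩ := regularFunctions.exists_common_denominator
    (f := fun (e : V × V) (a : G.CoeffPair) => a.coeff e.1 e.2)
    fun e => hG.coeff_mem_rationalFunctions e.1 e.2
  refine ⟨d, of fun w v => n (w, v), hd, fun S Λ h => ?_⟩
  ext w v
  exact hn (w, v) ⟨S, Λ, h⟩

-- With denominators cleared, the residual of `Λ = N / d` is a polynomial in the covariance matrix.
theorem exists_map_evalAt_eq_smul_residual (d : MvPolynomial (V × V) ℝ)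
    (N : Matrix V V (MvPolynomial (V × V) ℝ)) :
    ∃ Q : Matrix V V (MvPolynomial (V × V) ℝ), ∀ S Λ, evalAt S d • Λ = N.map (evalAt S) →
      Q.map (evalAt S) = evalAt S d ^ 2 • residual S Λ := by
  refine ⟨(d • 1 - N)ᵀ * mvPolynomialX V V ℝ * (d • 1 - N), fun S Λ h => ?_⟩
  have hsub : (d • 1 - N).map (evalAt S) = evalAt S d • (1 - Λ) := by
    rw [smul_sub, h, Matrix.map_sub _ (map_sub _)]
    congr 1
    ext v w
    by_cases hvw : v = w <;> simp [hvw]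
  have hX : (mvPolynomialX V V ℝ).map (evalAt S) = S := by
    ext
    simp
  simp only [Matrix.map_mul, transpose_map, hsub, hX, transpose_smul, smul_mul_assoc,
    mul_smul_comm, smul_smul, sq, residual]

theorem isCoeff_of_mem_algModel (hG : G.Acyclic) {d : MvPolynomial (V × V) ℝ}
    {N : Matrix V V (MvPolynomial (V × V) ℝ)}
    (hN : ∀ S Λ, G.IsCoeff S Λ → evalAt S d • Λ = N.map (evalAt S))
    (hS : S ∈ G.algModel) (hd : evalAt S d ≠ 0) (hΛ : evalAt S d • Λ = N.map (evalAt S)) :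
    G.IsCoeff S Λ := by
  obtain ⟨Q, hQ⟩ := exists_map_evalAt_eq_smul_residual d N
  have hN_apply : ∀ T M, evalAt T d • M = N.map (evalAt T) →
      ∀ v w, evalAt T (N v w) = evalAt T d * M v w :=
    fun T M h v w => (congrFun (congrFun h v) w).symm
  have hQ_apply : ∀ T M, evalAt T d • M = N.map (evalAt T) →
      ∀ v w, evalAt T (Q v w) = evalAt T d ^ 2 * residual T M v w :=
    fun T M h v w => congrFun (congrFun (hQ T M h) v) w
  refine ⟨fun v w hvw => ?_, fun v w hvw hB => ?_⟩
  · have hzero : evalAt S (N v w) = 0 := hS _ fun T hT => by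
      obtain ⟨-, M, hM⟩ := (mem_model_iff hG).1 hT
      exact (hN_apply T M (hN T M hM) v w).trans (by rw [hM.1 v w hvw, mul_zero])
    rw [hN_apply S Λ hΛ] at hzero
    exact (mul_eq_zero.1 hzero).resolve_left hd
  · have hzero : evalAt S (Q v w) = 0 := hS _ fun T hT => by
      obtain ⟨-, M, hM⟩ := (mem_model_iff hG).1 hT
      exact (hQ_apply T M (hN T M hM) v w).trans (by rw [hM.2 v w hvw hB, mul_zero])
    rw [hQ_apply S Λ hΛ] at hzero
    exact (mul_eq_zero.1 hzero).resolve_left (pow_ne_zero 2 hd)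

theorem IsBAP.exists_forall_existsUnique_isCoeff (hG : G.IsBAP) :
    ∃ d : MvPolynomial (V × V) ℝ, evalAt 1 d ≠ 0 ∧
      ∀ S ∈ G.algModel, evalAt S d ≠ 0 → ∃! Λ, G.IsCoeff S Λ := by
  obtain ⟨d, N, hd, hN⟩ := hG.exists_smul_coeff_eq
  refine ⟨d, hd, fun S hS hdS => ⟨(evalAt S d)⁻¹ • N.map (evalAt S), ?_, fun Λ hΛ => ?_⟩⟩
  · exact isCoeff_of_mem_algModel hG.1 hN hS hdS (smul_inv_smul₀ hdS _)
  · rw [← hN S Λ hΛ, inv_smul_smul₀ hdS]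

/-! ### Irreducibility of the model -/

theorem exists_polynomial_curve (hG : G.Acyclic) (hS : S ∈ G.model) (hT : T ∈ G.model) :
    ∃ A : Matrix V V (Polynomial ℝ), A.map (Polynomial.evalRingHom 0) = S ∧
      A.map (Polynomial.evalRingHom 1) = T ∧
      ∀ t ∈ Set.Icc (0 : ℝ) 1, A.map (Polynomial.evalRingHom t) ∈ G.model := by
  obtain ⟨Λ₀, Ω₀, hΛ₀, hΩ₀, rfl⟩ := hS
  obtain ⟨Λ₁, Ω₁, hΛ₁, hΩ₁, rfl⟩ := hT
  have hunit : IsUnit (1 - polynomialSegment Λ₀ Λ₁) := hG.isUnit_one_sub fun v w hvw => by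
    simp [polynomialSegment, AffineMap.lineMap_apply, hΛ₀ v w hvw, hΛ₁ v w hvw]
  have heval : ∀ t, (covariance (polynomialSegment Λ₀ Λ₁) (polynomialSegment Ω₀ Ω₁)).map
      (Polynomial.evalRingHom t) =
        covariance (AffineMap.lineMap Λ₀ Λ₁ t) (AffineMap.lineMap Ω₀ Ω₁ t) := fun t => by
    rw [covariance_map _ hunit, polynomialSegment_map_eval, polynomialSegment_map_eval]
  refine ⟨covariance (polynomialSegment Λ₀ Λ₁) (polynomialSegment Ω₀ Ω₁), ?_, ?_, fun t ht => ?_⟩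
  · rw [heval, AffineMap.lineMap_apply_zero, AffineMap.lineMap_apply_zero, covariance]
  · rw [heval, AffineMap.lineMap_apply_one, AffineMap.lineMap_apply_one, covariance]
  · rw [heval]
    exact ⟨_, _, hΛ₀.lineMap hΛ₁ t, hΩ₀.lineMap hΩ₁ ht, rfl⟩

theorem model_irreducible (hG : G.Acyclic) {p q : MvPolynomial (V × V) ℝ}
    (hpq : ∀ S ∈ G.model, evalAt S p = 0 ∨ evalAt S q = 0) :
    (∀ S ∈ G.model, evalAt S p = 0) ∨ ∀ S ∈ G.model, evalAt S q = 0 := by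
  by_contra! ⟨⟨S, hS, hp⟩, T, hT, hq⟩
  obtain ⟨A, hA₀, hA₁, hA⟩ := exists_polynomial_curve hG hS hT
  let alongCurve (r : MvPolynomial (V × V) ℝ) : Polynomial ℝ :=
    MvPolynomial.aeval (fun e => A e.1 e.2) r
  have heval : ∀ r t, (alongCurve r).eval t = evalAt (A.map (Polynomial.evalRingHom t)) r :=
    fun r t => (evalAt_map (Polynomial.aeval t) A r).symm
  have hmul : alongCurve p * alongCurve q = 0 := by
    refine Polynomial.eq_zero_of_infinite_isRoot _
      ((Set.Icc_infinite (zero_lt_one' ℝ)).mono fun t ht => ?_)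
    rw [Set.mem_ofPred_eq, Polynomial.IsRoot, Polynomial.eval_mul, heval, heval, mul_eq_zero]
    exact hpq _ (hA t ht)
  rcases mul_eq_zero.1 hmul with h | h
  · exact hp (by rw [← hA₀, ← heval, h, Polynomial.eval_zero])
  · exact hq (by rw [← hA₁, ← heval, h, Polynomial.eval_zero])

/-! ### Padding by the identity -/

section PadOne

variable {V R : Type*} [DecidableEq V] {W : Set V} [DecidablePred (· ∈ W)] [Semiring R]

/-- The block diagonal matrix on `V` with block `A` on `W` and the identity on the complement. -/
def padOne (A : Matrix W W R) : Matrix V V R :=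
  (fromBlocks A 0 0 1).submatrix (Equiv.sumCompl (· ∈ W)).symm (Equiv.sumCompl (· ∈ W)).symm

theorem padOne_apply_coe (A : Matrix W W R) (v w : W) : padOne A v w = A v w := by
  simp [padOne]

theorem padOne_apply_of_not {v w : V} (h : ¬ (v ∈ W ∧ w ∈ W)) (A : Matrix W W R) :
    padOne A v w = (1 : Matrix V V R) v w := by
  by_cases hv : v ∈ W <;> by_cases hw : w ∈ W
  · exact absurd ⟨hv, hw⟩ h
  · simp [padOne, hv, hw, Equiv.sumCompl_symm_apply_of_pos, Equiv.sumCompl_symm_apply_of_neg,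
      ne_of_mem_of_not_mem hv hw]
  · simp [padOne, hv, hw, Equiv.sumCompl_symm_apply_of_pos, Equiv.sumCompl_symm_apply_of_neg,
      (ne_of_mem_of_not_mem hw hv).symm]
  · simp [padOne, hv, hw, Equiv.sumCompl_symm_apply_of_neg, one_apply]

theorem padOne_submatrix (A : Matrix W W R) :
    (padOne A).submatrix Subtype.val Subtype.val = A := by
  ext v w
  exact padOne_apply_coe A v w

theorem padOne_one : padOne (1 : Matrix W W R) = 1 := by
  rw [padOne, fromBlocks_one, submatrix_one_equiv]

theorem padOne_transpose (A : Matrix W W R) : padOne Aᵀ = (padOne A)ᵀ := by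
  simp [padOne, fromBlocks_transpose]

theorem padOne_map {R' F : Type*} [Semiring R'] [FunLike F R R'] [RingHomClass F R R'] (f : F)
    (A : Matrix W W R) : (padOne A).map f = padOne (A.map f) := by
  simp [padOne, ← submatrix_map, fromBlocks_map]

theorem padOne_mul [Fintype V] (A B : Matrix W W R) : padOne (A * B) = padOne A * padOne B := by
  simp [padOne, fromBlocks_multiply]

theorem posDef_padOne [Finite V] {A : Matrix W W ℝ} (hA : A.PosDef) :
    (padOne A : Matrix V V ℝ).PosDef :=
  (posDef_fromBlocks_zero hA .one).submatrix (Equiv.injective _)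

variable (W) in
theorem exists_evalAt_padOne (d : MvPolynomial (V × V) ℝ) :
    ∃ q : MvPolynomial (W × W) ℝ, ∀ S : Matrix W W ℝ, evalAt S q = evalAt (padOne S) d := by
  refine ⟨MvPolynomial.aeval (fun e => padOne (mvPolynomialX W W ℝ) e.1 e.2) d, fun S => ?_⟩
  let f : MvPolynomial (W × W) ℝ →ₐ[ℝ] ℝ := MvPolynomial.aeval fun e => S e.1 e.2
  have hX : (mvPolynomialX W W ℝ).map f = S := by
    ext
    simp [f]
  calc evalAt S (MvPolynomial.aeval (fun e => padOne (mvPolynomialX W W ℝ) e.1 e.2) d)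
      = f (MvPolynomial.aeval (fun e => padOne (mvPolynomialX W W ℝ) e.1 e.2) d) := by
        rw [MvPolynomial.aeval_eq_eval]
    _ = evalAt ((padOne (mvPolynomialX W W ℝ)).map f) d := (evalAt_map f _ d).symm
    _ = evalAt (padOne S) d := by rw [padOne_map, hX]

end PadOne

section Induce

variable {W : Set V} [DecidablePred (· ∈ W)] {S : Matrix W W ℝ}

theorem IsCoeff.padOne {Λ : Matrix W W ℝ} (h : (G.induce W).IsCoeff S Λ) :
    G.IsCoeff (padOne S) (1 - padOne (1 - Λ)) := by
  have hres : residual (MixedGraph.padOne S) (1 - MixedGraph.padOne (1 - Λ) : Matrix V V ℝ) =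
      MixedGraph.padOne (residual S Λ) := by
    simp only [residual, sub_sub_cancel, padOne_mul, padOne_transpose]
  refine ⟨fun v w hvw => ?_, fun v w hvw hB => ?_⟩
  · by_cases hW : v ∈ W ∧ w ∈ W
    · lift v to W using hW.1
      lift w to W using hW.2
      simp [padOne_apply_coe, one_apply, Subtype.ext_iff, h.1 v w hvw]
    · simp [padOne_apply_of_not hW]
  · rw [hres]
    by_cases hW : v ∈ W ∧ w ∈ W
    · lift v to W using hW.1
      lift w to W using hW.2
      rw [padOne_apply_coe]
      exact h.2 v w (mt (congrArg _) hvw) hB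
    · rw [padOne_apply_of_not hW, one_apply_ne hvw]

theorem IsCoeff.induce {Λ : Matrix V V ℝ} (h : G.IsCoeff (MixedGraph.padOne S) Λ)
    (hΛ : ∀ u ∉ W, ∀ w ∈ W, Λ u w = 0) :
    (G.induce W).IsCoeff S (Λ.submatrix Subtype.val Subtype.val) := by
  have hone_sub : ∀ u ∉ Set.range (Subtype.val : W → V), ∀ w : W, (1 - Λ) u w = 0 := by
    intro u hu w
    rw [Subtype.range_coe] at hu
    simp [hΛ u hu w w.2, (ne_of_mem_of_not_mem w.2 hu).symm]
  have hres : (residual (MixedGraph.padOne S) Λ).submatrix (Subtype.val : W → V) Subtype.val =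
      residual S (Λ.submatrix Subtype.val Subtype.val) := by
    have hsub : (1 - Λ).submatrix (Subtype.val : W → V) (Subtype.val : W → V) =
        1 - Λ.submatrix Subtype.val Subtype.val := by
      rw [submatrix_sub, Pi.sub_apply, Pi.sub_apply, submatrix_one _ Subtype.val_injective]
    rw [residual, residual,
      submatrix_mul_of_forall_eq_zero Subtype.val_injective fun u hu _ w => by
        rw [hone_sub u hu w, mul_zero],
      submatrix_mul_of_forall_eq_zero Subtype.val_injective fun u hu w _ => by
        rw [transpose_apply, hone_sub u hu w, zero_mul],
      ← transpose_submatrix, padOne_submatrix, hsub]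
  refine ⟨fun v w hvw => h.1 v w hvw, fun v w hvw hB => ?_⟩
  rw [← hres]
  exact h.2 v w (mt Subtype.ext hvw) hB

theorem padOne_mem_model (hG : G.Acyclic) (hS : S ∈ (G.induce W).model) : padOne S ∈ G.model := by
  obtain ⟨hpos, Λ, hΛ⟩ := (mem_model_iff (hG.induce W)).1 hS
  exact (mem_model_iff hG).2 ⟨posDef_padOne hpos, _, hΛ.padOne⟩

theorem diagonal_mul_padOne_mul_diagonal {R : Type*} [Semiring R] (A : Matrix W W R) {s : V → R}
    (hW : ∀ v ∈ W, s v = 1) (hs : ∀ v, s v * s v = 1) :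
    diagonal s * padOne A * diagonal s = padOne A := by
  ext v w
  rw [mul_diagonal, diagonal_mul]
  by_cases h : v ∈ W ∧ w ∈ W
  · rw [hW v h.1, hW w h.2, one_mul, mul_one]
  · rw [padOne_apply_of_not h]
    by_cases hvw : v = w
    · subst hvw
      rw [one_apply_eq, mul_one, hs]
    · simp [hvw]

theorem eq_zero_of_existsUnique_isCoeff_padOne (hunique : ∃! Λ, G.IsCoeff (padOne S) Λ)
    {Λ : Matrix V V ℝ} (hΛ : G.IsCoeff (padOne S) Λ) {u w : V} (hu : u ∉ W) (hw : w ∈ W) :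
    Λ u w = 0 := by
  let s : V → ℝ := fun v => if v ∈ W then 1 else -1
  have hs : ∀ v, s v * s v = 1 := fun v => by by_cases hv : v ∈ W <;> simp [s, hv]
  have hflip := hΛ.rescale hs
  rw [diagonal_mul_padOne_mul_diagonal S (fun v hv => if_pos hv) hs] at hflip
  have hentry := congrFun (congrFun (hunique.unique hflip hΛ) u) w
  rw [mul_diagonal, diagonal_mul] at hentry
  simp only [s, hu, hw, if_true, if_false] at hentry
  linarith

theorem mem_model_induce_of_existsUnique (hG : G.Acyclic) (hS : S.PosDef)
    (hunique : ∃! Λ, G.IsCoeff (padOne S) Λ) : S ∈ (G.induce W).model := by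
  obtain ⟨Λ, hΛ⟩ := hunique.exists
  exact (mem_model_iff (hG.induce W)).2 ⟨hS, _,
    hΛ.induce fun u hu w hw => eq_zero_of_existsUnique_isCoeff_padOne hunique hΛ hu hw⟩

end Induce

theorem algModel_induce_mono {G' : MixedGraph V} (hG : G.Acyclic) (hG' : G'.IsBAP)
    (hsub : G.algModel ⊆ G'.algModel) (W : Set V) [DecidablePred (· ∈ W)] :
    (G.induce W).algModel ⊆ (G'.induce W).algModel := by
  intro S hS p hp
  obtain ⟨d, hd, hunique⟩ := hG'.exists_forall_existsUnique_isCoeff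
  obtain ⟨q, hq⟩ := exists_evalAt_padOne W d
  have hpq : ∀ T ∈ (G.induce W).model, evalAt T p = 0 ∨ evalAt T q = 0 := by
    intro T hT
    refine or_iff_not_imp_right.2 fun hqT => hp T ?_
    have hmem : padOne T ∈ G'.algModel := hsub fun r hr => hr _ (padOne_mem_model hG hT)
    exact mem_model_induce_of_existsUnique hG'.1 ((mem_model_iff (hG.induce W)).1 hT).1
      (hunique _ hmem (hq T ▸ hqT))
  refine hS p ((model_irreducible (hG.induce W) hpq).resolve_right fun hq0 => hd ?_)
  rw [← padOne_one (W := W), ← hq]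
  exact hq0 1 (one_mem_model (hG.induce W))

end MixedGraph

/-- Theorem 5: If two BAPs are algebraically equivalent, then so are
their induced subgraphs on any subset `W` of the vertices. -/
theorem algModel_induce_eq_of_algModel_eq
    {V : Type*} [Fintype V] [DecidableEq V]
    (G G' : MixedGraph V) (hG : G.IsBAP) (hG' : G'.IsBAP)
    (heq : G.algModel = G'.algModel)
    (W : Set V) [DecidablePred (· ∈ W)] :
    (G.induce W).algModel = (G'.induce W).algModel := by
  exact (MixedGraph.algModel_induce_mono hG.1 hG' heq.subset W).antisymm
    (MixedGraph.algModel_induce_mono hG'.1 hG heq.superset W)
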